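/- arXiv:2202.08573 — 2 statements merged into one kernel-verified Lean document; each statement's English description precedes it below -/
import Mathlib

section
/- Consider a linear model with orthogonal design X′X = nI_p, response Y ∈ ℝ^n, tuning vector Λ = (λ₁,…,λ_p) with λ₁ ≥ … ≥ λ_p ≥ 0, OLS estimator β̂^OLS = (1/n)X′Y and SLOPE estimator β̂^SLOPE = argmin_b [½‖Y − Xb‖₂² + J_Λ(b)]. Let π be a permutation of (1,…,p) with |β̂^OLS_{π(1)}| ≥ … ≥ |β̂^OLS_{π(p)}|. Then for each i ∈ {1,…,p−1}, if |β̂^OLS_{π(i)}| − |β̂^OLS_{π(i+1)}| ≤ (λ_i − λ_{i+1})/n, then |β̂^SLOPE_{π(i)}| = |β̂^SLOPE_{π(i+1)}|. -/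
/-!
Since `XᵀX = c I`, the least squares loss is `c/2 ‖b - z‖²` up to an additive constant, where `z`
is the OLS estimate. Flipping signs and permuting coordinates then lets one replace the SLOPE
estimate and `z` by their vectors of absolute values `u` and `w`, listed so that `w` is antitone:
`u` minimises `c/2 ‖v - w‖² + J_Λ(v)` among nonnegative `v`.

Test this against the vector obtained from `u` by replacing `uᵢ` and `uₖ` by their mean. The
quadratic part changes by `c/2 (uᵢ - uₖ) ((wᵢ - wₖ) - (uᵢ - uₖ)/2)`. As `J_Λ` is symmetric and
convex on the nonnegative cone, averaging does not increase it, so `wₖ ≤ wᵢ` forces `uₖ ≤ uᵢ`;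
hence `u` is antitone too. For adjacent `i` and `k` the averaged vector is again antitone, so `J_Λ`
decreases by exactly `(Λᵢ - Λₖ) (uᵢ - uₖ) / 2`. If `c (wᵢ - wₖ) ≤ Λᵢ - Λₖ` and `uₖ < uᵢ`, the
objective would therefore drop strictly.
-/

open Matrix

/-- The SLOPE (sorted ℓ₁) norm `J_Λ(b) = ∑ Λᵢ |b|₍ᵢ₎`, expressed (for `Λ` sorted
in decreasing order) as the maximum over permutations of `∑ Λᵢ |b (σ i)|`. -/
noncomputable def slopeNorm {p : ℕ} (Λ : Fin p → ℝ) (b : Fin p → ℝ) : ℝ :=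
  ⨆ σ : Equiv.Perm (Fin p), ∑ i, Λ i * |b (σ i)|

/-- The SLOPE objective function `b ↦ ½‖Y - Xb‖₂² + J_Λ(b)`. -/
noncomputable def slopeObj {n p : ℕ} (X : Matrix (Fin n) (Fin p) ℝ) (Y : Fin n → ℝ)
    (Λ : Fin p → ℝ) (b : Fin p → ℝ) : ℝ :=
  (1 / 2) * ∑ i, (Y i - (X *ᵥ b) i) ^ 2 + slopeNorm Λ b

section SwapMean

variable {ι : Type*} [DecidableEq ι]

/-- The average of `u` and of `u` with its coordinates `i` and `k` exchanged: the vector `u` with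
`u i` and `u k` both replaced by their mean. It is the competitor to the SLOPE estimate. -/
noncomputable def swapMean (i k : ι) (u : ι → ℝ) (j : ι) : ℝ :=
  (u j + u (Equiv.swap i k j)) / 2

lemma swapMean_apply_left (i k : ι) (u : ι → ℝ) : swapMean i k u i = (u i + u k) / 2 := by
  simp [swapMean]

lemma swapMean_apply_right (i k : ι) (u : ι → ℝ) : swapMean i k u k = (u i + u k) / 2 := by
  simp [swapMean, add_comm]

lemma swapMean_apply_of_ne_of_ne {i k j : ι} (hi : j ≠ i) (hk : j ≠ k) (u : ι → ℝ) :
    swapMean i k u j = u j := by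
  simp [swapMean, Equiv.swap_apply_of_ne_of_ne hi hk]

lemma swapMean_nonneg {u : ι → ℝ} (hu : 0 ≤ u) (i k : ι) : 0 ≤ swapMean i k u := fun j =>
  div_nonneg (add_nonneg (hu j) (hu _)) zero_le_two

lemma sum_swapMean_sub_sum {M : Type*} [AddCommGroup M] [Fintype ι] {i k : ι} (hik : i ≠ k)
    (F : ι → ℝ → M) (u : ι → ℝ) :
    ∑ j, F j (swapMean i k u j) - ∑ j, F j (u j) =
      (F i ((u i + u k) / 2) - F i (u i)) + (F k ((u i + u k) / 2) - F k (u k)) := by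
  rw [← Finset.sum_sub_distrib, Fintype.sum_eq_add i k hik, swapMean_apply_left,
    swapMean_apply_right]
  rintro j ⟨hi, hk⟩
  rw [swapMean_apply_of_ne_of_ne hi hk, sub_self]

end SwapMean

section Adjacent

variable {ι : Type*} [LinearOrder ι] {i k : ι}

lemma swap_le_swap_of_covBy (hik : i ⋖ k) {j l : ι} (hjl : j ≤ l) (hne : ¬(j = i ∧ l = k)) :
    Equiv.swap i k j ≤ Equiv.swap i k l := by
  have hlt := hik.lt
  have hbelow : ∀ {x}, x < k → x ≤ i := hik.le_of_lt
  have habove : ∀ {x}, i < x → k ≤ x := hik.ge_of_gt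
  grind

lemma antitone_swapMean_of_covBy {u : ι → ℝ} (hu : Antitone u) (hik : i ⋖ k) :
    Antitone (swapMean i k u) := by
  intro j l hjl
  by_cases h : j = i ∧ l = k
  · obtain ⟨rfl, rfl⟩ := h
    rw [swapMean_apply_left, swapMean_apply_right]
  · have hswap := hu (swap_le_swap_of_covBy hik hjl h)
    exact div_le_div_of_nonneg_right (add_le_add (hu hjl) hswap) zero_le_two

end Adjacent

section SlopeNorm

variable {p : ℕ} (Λ : Fin p → ℝ)

lemma sum_mul_abs_comp_perm_le_slopeNorm (b : Fin p → ℝ) (σ : Equiv.Perm (Fin p)) :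
    ∑ i, Λ i * |b (σ i)| ≤ slopeNorm Λ b :=
  le_ciSup (f := fun σ : Equiv.Perm (Fin p) => ∑ i, Λ i * |b (σ i)|)
    (Set.finite_range _).bddAbove σ

lemma slopeNorm_abs (b : Fin p → ℝ) : slopeNorm Λ |b| = slopeNorm Λ b := by
  simp [slopeNorm]

lemma slopeNorm_comp_perm (b : Fin p → ℝ) (τ : Equiv.Perm (Fin p)) :
    slopeNorm Λ (b ∘ τ) = slopeNorm Λ b :=
  (Equiv.mulLeft τ).iSup_congr fun _ => rfl

lemma slopeNorm_eq_sum_of_antitone {Λ : Fin p → ℝ} (hΛ : Antitone Λ) {u : Fin p → ℝ}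
    (hu : 0 ≤ u) (hu_anti : Antitone u) : slopeNorm Λ u = ∑ i, Λ i * u i := by
  refine le_antisymm (ciSup_le fun σ => ?_) ?_
  · simpa only [abs_of_nonneg (hu _)] using
      (hΛ.monovary hu_anti).sum_mul_comp_perm_le_sum_mul (σ := σ)
  · simpa [abs_of_nonneg (hu _)] using sum_mul_abs_comp_perm_le_slopeNorm Λ u 1

lemma convexOn_slopeNorm : ConvexOn ℝ (Set.Ici 0) (slopeNorm Λ) := by
  refine ⟨convex_Ici 0, fun u hu v hv s t hs ht _ => ciSup_le fun σ => ?_⟩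
  have habs (j : Fin p) : |(s • u + t • v) j| = s * |u j| + t * |v j| := by
    have hnonneg : 0 ≤ s * u j + t * v j :=
      add_nonneg (mul_nonneg hs (hu j)) (mul_nonneg ht (hv j))
    simpa [abs_of_nonneg (hu j), abs_of_nonneg (hv j)] using hnonneg
  calc ∑ i, Λ i * |(s • u + t • v) (σ i)|
      = s * ∑ i, Λ i * |u (σ i)| + t * ∑ i, Λ i * |v (σ i)| := by
        rw [Finset.mul_sum, Finset.mul_sum, ← Finset.sum_add_distrib]
        exact Finset.sum_congr rfl fun i _ => by rw [habs]; ring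
    _ ≤ s * slopeNorm Λ u + t * slopeNorm Λ v :=
        add_le_add
          (mul_le_mul_of_nonneg_left (sum_mul_abs_comp_perm_le_slopeNorm Λ u σ) hs)
          (mul_le_mul_of_nonneg_left (sum_mul_abs_comp_perm_le_slopeNorm Λ v σ) ht)

lemma slopeNorm_swapMean_le {u : Fin p → ℝ} (hu : 0 ≤ u) (i k : Fin p) :
    slopeNorm Λ (swapMean i k u) ≤ slopeNorm Λ u := by
  have hmean : swapMean i k u = (1 / 2 : ℝ) • u + (1 / 2 : ℝ) • (u ∘ Equiv.swap i k) := by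
    ext j
    simp only [swapMean, Pi.add_apply, Pi.smul_apply, Function.comp_apply, smul_eq_mul]
    ring
  have hswap : u ∘ Equiv.swap i k ∈ Set.Ici 0 := fun j => hu (Equiv.swap i k j)
  calc slopeNorm Λ (swapMean i k u)
      ≤ (1 / 2 : ℝ) • slopeNorm Λ u + (1 / 2 : ℝ) • slopeNorm Λ (u ∘ Equiv.swap i k) := by
        rw [hmean]
        exact (convexOn_slopeNorm Λ).2 hu hswap (by norm_num) (by norm_num) (by norm_num)
    _ = slopeNorm Λ u := by
        rw [slopeNorm_comp_perm, ← add_smul]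
        norm_num

lemma slopeNorm_swapMean_of_covBy {Λ : Fin p → ℝ} (hΛ : Antitone Λ) {u : Fin p → ℝ}
    (hu : 0 ≤ u) (hu_anti : Antitone u) {i k : Fin p} (hik : i ⋖ k) :
    slopeNorm Λ (swapMean i k u) = slopeNorm Λ u - (Λ i - Λ k) * (u i - u k) / 2 := by
  rw [slopeNorm_eq_sum_of_antitone hΛ hu hu_anti,
    slopeNorm_eq_sum_of_antitone hΛ (swapMean_nonneg hu i k)
      (antitone_swapMean_of_covBy hu_anti hik)]
  linear_combination sum_swapMean_sub_sum hik.ne (fun j x => Λ j * x) u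

end SlopeNorm

section Prox

variable {p : ℕ} {c : ℝ} {Λ z w b u : Fin p → ℝ}

/-- The objective `b ↦ c/2 ‖b - z‖₂² + J_Λ(b)`, whose minimisers form the value at `z` of the
proximal operator of `J_Λ / c`. The SLOPE problem for a design with `XᵀX = c I` reduces to it. -/
noncomputable def slopeProxObj (c : ℝ) (Λ z b : Fin p → ℝ) : ℝ :=
  c / 2 * ∑ j, (b j - z j) ^ 2 + slopeNorm Λ b

lemma slopeProxObj_comp_perm (c : ℝ) (Λ z b : Fin p → ℝ) (τ : Equiv.Perm (Fin p)) :
    slopeProxObj c Λ (z ∘ τ) (b ∘ τ) = slopeProxObj c Λ z b := by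
  simp only [slopeProxObj, slopeNorm_comp_perm, Function.comp_apply]
  rw [Equiv.sum_comp τ fun j => (b j - z j) ^ 2]

lemma isMinOn_slopeProxObj_comp_perm (hb : IsMinOn (slopeProxObj c Λ z) Set.univ b)
    (τ : Equiv.Perm (Fin p)) : IsMinOn (slopeProxObj c Λ (z ∘ τ)) Set.univ (b ∘ τ) := by
  refine isMinOn_univ_iff.2 fun v => ?_
  have hv : v = (v ∘ τ.symm) ∘ τ := by ext; simp
  rw [hv, slopeProxObj_comp_perm, slopeProxObj_comp_perm]
  exact isMinOn_univ_iff.1 hb _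

lemma exists_abs_eq_and_sub_sq_eq {r : ℝ} (hr : 0 ≤ r) (x : ℝ) :
    ∃ t : ℝ, |t| = r ∧ (t - x) ^ 2 = (r - |x|) ^ 2 := by
  rcases le_total 0 x with hx | hx
  · exact ⟨r, abs_of_nonneg hr, by rw [abs_of_nonneg hx]⟩
  · exact ⟨-r, by rw [abs_neg, abs_of_nonneg hr], by rw [abs_of_nonpos hx]; ring⟩

lemma slopeProxObj_abs_abs_le (hc : 0 ≤ c) (Λ z b : Fin p → ℝ) :
    slopeProxObj c Λ |z| |b| ≤ slopeProxObj c Λ z b := by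
  rw [slopeProxObj, slopeProxObj, slopeNorm_abs]
  gcongr c / 2 * ∑ j, ?_ + _
  exact sq_le_sq.2 (abs_abs_sub_abs_le_abs_sub _ _)

lemma isMinOn_slopeProxObj_abs (hc : 0 ≤ c) (hb : IsMinOn (slopeProxObj c Λ z) Set.univ b) :
    IsMinOn (slopeProxObj c Λ |z|) (Set.Ici 0) |b| := by
  refine isMinOn_iff.2 fun v hv => ?_
  choose v' hv'_abs hv'_sq using fun j => exists_abs_eq_and_sub_sq_eq (hv j) (z j)
  calc slopeProxObj c Λ |z| |b| ≤ slopeProxObj c Λ z b := slopeProxObj_abs_abs_le hc Λ z b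
    _ ≤ slopeProxObj c Λ z v' := isMinOn_univ_iff.1 hb v'
    _ = slopeProxObj c Λ |z| v := by
        have hnorm : slopeNorm Λ v' = slopeNorm Λ v := by
          rw [← slopeNorm_abs, show |v'| = v from funext hv'_abs]
        simp only [slopeProxObj, hv'_sq, hnorm, Pi.abs_apply]

lemma slopeProxObj_swapMean_sub (c : ℝ) (Λ w u : Fin p → ℝ) {i k : Fin p} (hik : i ≠ k) :
    slopeProxObj c Λ w (swapMean i k u) - slopeProxObj c Λ w u =
      c / 2 * ((u i - u k) * ((w i - w k) - (u i - u k) / 2)) +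
        (slopeNorm Λ (swapMean i k u) - slopeNorm Λ u) := by
  rw [slopeProxObj, slopeProxObj]
  linear_combination c / 2 * sum_swapMean_sub_sum hik (fun j x => (x - w j) ^ 2) u

lemma apply_le_apply_of_isMinOn_slopeProxObj (hc : 0 < c) (hu : 0 ≤ u)
    (hmin : IsMinOn (slopeProxObj c Λ w) (Set.Ici 0) u) {i k : Fin p} (hw : w k ≤ w i) :
    u k ≤ u i := by
  by_contra! hlt
  have hik : i ≠ k := by rintro rfl; exact hlt.false
  have hchange := slopeProxObj_swapMean_sub c Λ w u hik
  have hle : slopeProxObj c Λ w u ≤ slopeProxObj c Λ w (swapMean i k u) :=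
    isMinOn_iff.1 hmin _ (swapMean_nonneg hu i k)
  have hnorm := slopeNorm_swapMean_le Λ hu i k
  have hquad : c / 2 * ((u i - u k) * ((w i - w k) - (u i - u k) / 2)) < 0 :=
    mul_neg_of_pos_of_neg (half_pos hc) (mul_neg_of_neg_of_pos (by linarith) (by linarith))
  linarith

lemma apply_eq_apply_of_isMinOn_slopeProxObj (hc : 0 < c) (hΛ : Antitone Λ) (hw : Antitone w)
    (hu : 0 ≤ u) (hmin : IsMinOn (slopeProxObj c Λ w) (Set.Ici 0) u) {i k : Fin p} (hik : i ⋖ k)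
    (hgap : w i - w k ≤ (Λ i - Λ k) / c) : u i = u k := by
  have hu_anti : Antitone u := fun _ _ hjl =>
    apply_le_apply_of_isMinOn_slopeProxObj hc hu hmin (hw hjl)
  by_contra hne
  have hpos : 0 < u i - u k := sub_pos.2 ((hu_anti hik.le).lt_of_ne' hne)
  have hchange := slopeProxObj_swapMean_sub c Λ w u hik.ne
  rw [slopeNorm_swapMean_of_covBy hΛ hu hu_anti hik] at hchange
  have hle : slopeProxObj c Λ w u ≤ slopeProxObj c Λ w (swapMean i k u) :=
    isMinOn_iff.1 hmin _ (swapMean_nonneg hu i k)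
  have hgap' : c * (w i - w k) ≤ Λ i - Λ k := (le_div_iff₀' hc).1 hgap
  have hgain := mul_le_mul_of_nonneg_left hgap' hpos.le
  have hstrict : 0 < c * (u i - u k) ^ 2 := by positivity
  linarith

end Prox

section OrthogonalDesign

lemma dotProduct_sub_mulVec_self {m ι : Type*} [Fintype m] [Fintype ι] [DecidableEq ι] {c : ℝ}
    {X : Matrix m ι ℝ} (hX : Xᵀ * X = c • (1 : Matrix ι ι ℝ)) {Y : m → ℝ} {z : ι → ℝ}
    (hz : Xᵀ *ᵥ Y = c • z) (b : ι → ℝ) :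
    (Y - X *ᵥ b) ⬝ᵥ (Y - X *ᵥ b) = c * ((b - z) ⬝ᵥ (b - z)) + (Y ⬝ᵥ Y - c * (z ⬝ᵥ z)) := by
  have hcross : Y ⬝ᵥ X *ᵥ b = c * (z ⬝ᵥ b) := by
    rw [dotProduct_mulVec, ← mulVec_transpose, hz, smul_dotProduct, smul_eq_mul]
  have hgram : (X *ᵥ b) ⬝ᵥ X *ᵥ b = c * (b ⬝ᵥ b) := by
    rw [dotProduct_mulVec, ← mulVec_transpose, mulVec_mulVec, hX, smul_mulVec, one_mulVec,
      smul_dotProduct, smul_eq_mul]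
  simp only [sub_dotProduct, dotProduct_sub]
  rw [dotProduct_comm (X *ᵥ b) Y, dotProduct_comm b z, hcross, hgram]
  ring

variable {n p : ℕ} {c : ℝ} {X : Matrix (Fin n) (Fin p) ℝ} {Y : Fin n → ℝ} {Λ z b : Fin p → ℝ}

lemma slopeObj_eq_slopeProxObj_add (hX : Xᵀ * X = c • (1 : Matrix (Fin p) (Fin p) ℝ))
    (hz : Xᵀ *ᵥ Y = c • z) (Λ b : Fin p → ℝ) :
    slopeObj X Y Λ b = slopeProxObj c Λ z b + (Y ⬝ᵥ Y - c * (z ⬝ᵥ z)) / 2 := by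
  have hloss : ∑ i, (Y i - (X *ᵥ b) i) ^ 2 =
      c * ∑ j, (b j - z j) ^ 2 + (Y ⬝ᵥ Y - c * (z ⬝ᵥ z)) := by
    simpa only [dotProduct, Pi.sub_apply, ← sq] using dotProduct_sub_mulVec_self hX hz b
  rw [slopeObj, slopeProxObj, hloss]
  ring

lemma isMinOn_slopeProxObj_of_slopeObj (hX : Xᵀ * X = c • (1 : Matrix (Fin p) (Fin p) ℝ))
    (hz : Xᵀ *ᵥ Y = c • z) (hb : ∀ b', slopeObj X Y Λ b ≤ slopeObj X Y Λ b') :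
    IsMinOn (slopeProxObj c Λ z) Set.univ b := by
  simpa only [isMinOn_univ_iff, slopeObj_eq_slopeProxObj_add hX hz, add_le_add_iff_right] using hb

end OrthogonalDesign

theorem slope_clusters_of_close_ols_general {n p : ℕ} {c : ℝ} (hc : 0 < c)
    {X : Matrix (Fin n) (Fin p) ℝ} {Y : Fin n → ℝ}
    (hX : Xᵀ * X = c • (1 : Matrix (Fin p) (Fin p) ℝ))
    {Λ : Fin p → ℝ} (hΛ : Antitone Λ)
    {βOLS : Fin p → ℝ} (hOLS : βOLS = (1 / c) • (Xᵀ *ᵥ Y))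
    {βS : Fin p → ℝ} (hβS : ∀ b, slopeObj X Y Λ βS ≤ slopeObj X Y Λ b)
    {τ : Equiv.Perm (Fin p)} (hτ : Antitone fun i => |βOLS (τ i)|)
    {i k : Fin p} (hik : i ⋖ k) (hgap : |βOLS (τ i)| - |βOLS (τ k)| ≤ (Λ i - Λ k) / c) :
    |βS (τ i)| = |βS (τ k)| := by
  have hnormal : Xᵀ *ᵥ Y = c • βOLS := by rw [hOLS, one_div, smul_inv_smul₀ hc.ne']
  have hprox := isMinOn_slopeProxObj_of_slopeObj hX hnormal hβS
  have hsorted := isMinOn_slopeProxObj_abs hc.le (isMinOn_slopeProxObj_comp_perm hprox τ)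
  exact apply_eq_apply_of_isMinOn_slopeProxObj hc hΛ hτ (abs_nonneg _) hsorted hik hgap

/-- Clustering of SLOPE in orthogonal design: if `τ` sorts `|β̂OLS|` decreasingly and
`|β̂OLS_{τ(i)}| - |β̂OLS_{τ(i+1)}| ≤ (Λ_i - Λ_{i+1})/n`, then the SLOPE estimate has
`|β̂SLOPE_{τ(i)}| = |β̂SLOPE_{τ(i+1)}|`. -/
theorem slope_clusters_of_close_ols {n p : ℕ} (hn : 0 < n)
    (X : Matrix (Fin n) (Fin p) ℝ) (Y : Fin n → ℝ)
    (hX : Xᵀ * X = (n : ℝ) • (1 : Matrix (Fin p) (Fin p) ℝ))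
    (Λ : Fin p → ℝ) (hΛanti : Antitone Λ) (hΛnonneg : ∀ i, 0 ≤ Λ i)
    (βOLS : Fin p → ℝ) (hOLS : βOLS = (1 / (n : ℝ)) • (Xᵀ *ᵥ Y))
    (βS : Fin p → ℝ) (hβS : ∀ b, slopeObj X Y Λ βS ≤ slopeObj X Y Λ b)
    (τ : Equiv.Perm (Fin p))
    (hτ : ∀ i j : Fin p, i ≤ j → |βOLS (τ j)| ≤ |βOLS (τ i)|) :
    ∀ i : Fin p, ∀ h : (i : ℕ) + 1 < p,
      |βOLS (τ i)| - |βOLS (τ ⟨(i : ℕ) + 1, h⟩)| ≤ (Λ i - Λ ⟨(i : ℕ) + 1, h⟩) / n →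
      |βS (τ i)| = |βS (τ ⟨(i : ℕ) + 1, h⟩)| := fun i _ hgap =>
  slope_clusters_of_close_ols_general (Nat.cast_pos.2 hn) hX hΛanti hOLS hβS hτ
    (Fin.covBy_iff.2 (Order.covBy_add_one (i : ℕ))) hgap
end

section
/- For each n ≥ 1 consider the linear model Y^(n) = X^(n)β + ε^(n) with X^(n) ∈ ℝ^{n×p} deterministic of rank p, ε^(n) ~ N(0, σ²I_n), and assume n^{-1}(X^(n))′X^(n) → C for a positive definite matrix C. Let β̂^SLOPE_n be the SLOPE estimator with tuning vector Λ^(n) = (λ₁^(n),…,λ_p^(n)), λ₁^(n) ≥ … ≥ λ_p^(n) ≥ 0, λ₁^(n) > 0. If λ₁^(n)/n → 0 as n → ∞, then β̂^SLOPE_n → β almost surely. -/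
/-!
Perturbing one coordinate of a minimiser `b` by `t` and letting `t → 0` gives
`‖Xᵀ(Y - Xb)‖_∞ ≤ ‖Λ‖_∞`, because `J_Λ` is `‖Λ‖_∞`-Lipschitz for the `ℓ¹` distance. With
`G = n⁻¹XᵀX`, the estimation error therefore satisfies
`G(b - β) = n⁻¹Xᵀε - n⁻¹Xᵀ(Y - Xb)`, whose last term is at most `‖Λ‖_∞/n → 0`. The coordinates of
`n⁻¹Xᵀε` are sub-Gaussian with variance proxy `O(1/n)`, so their tails are summable in `n` and the
first Borel–Cantelli lemma, which needs no independence between different `n`, sends them to `0`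
almost surely. Applying `G⁻¹ → C⁻¹` gives `b - β → 0`.
-/

open Matrix MeasureTheory ProbabilityTheory Filter Topology

section PenalizedLeastSquares

lemma abs_le_of_forall_mul_le_add_sq {a L q : ℝ} (h : ∀ t, t * a ≤ L * |t| + q * t ^ 2) :
    |a| ≤ L := by
  have hle : ∀ t > 0, |a| ≤ L + q * t := fun t ht ↦ by
    have hpos := h t
    have hneg := h (-t)
    rw [abs_neg] at hneg
    rw [abs_of_pos ht] at hpos hneg
    refine le_of_mul_le_mul_left ?_ ht
    rcases abs_cases a with ⟨ha, -⟩ | ⟨ha, -⟩ <;> rw [ha] <;> linarith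
  have hlim : Tendsto (fun t ↦ L + q * t) (𝓝[>] 0) (𝓝 L) :=
    (Continuous.tendsto' (by fun_prop) 0 L (by simp)).mono_left nhdsWithin_le_nhds
  exact ge_of_tendsto hlim (eventually_nhdsWithin_of_forall hle)

lemma sum_sq_sub_mulVec_add_single {ι κ : Type*} [Fintype ι] [Fintype κ] [DecidableEq κ]
    (X : Matrix ι κ ℝ) (y : ι → ℝ) (b : κ → ℝ) (j : κ) (t : ℝ) :
    ∑ i, (y i - (X *ᵥ (b + Pi.single j t)) i) ^ 2 =
      ∑ i, (y i - (X *ᵥ b) i) ^ 2 - 2 * t * (Xᵀ *ᵥ (y - X *ᵥ b)) j + (∑ i, X i j ^ 2) * t ^ 2 := by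
  have hscore : (Xᵀ *ᵥ (y - X *ᵥ b)) j = ∑ i, X i j * (y i - (X *ᵥ b) i) := rfl
  rw [hscore, Finset.mul_sum, Finset.sum_mul, ← Finset.sum_sub_distrib, ← Finset.sum_add_distrib]
  refine Finset.sum_congr rfl fun i _ ↦ ?_
  simp only [mulVec_add, mulVec_single, Pi.add_apply, Pi.smul_apply, col_apply,
    op_smul_eq_mul]
  ring

lemma abs_transpose_mulVec_residual_le {ι κ : Type*} [Fintype ι] [Fintype κ]
    {X : Matrix ι κ ℝ} {y : ι → ℝ} {J : (κ → ℝ) → ℝ} {L : ℝ}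
    (hJ : ∀ a b, J b ≤ J a + L * ∑ i, |b i - a i|) {b : κ → ℝ}
    (hb : ∀ b', 1 / 2 * ∑ i, (y i - (X *ᵥ b) i) ^ 2 + J b ≤
      1 / 2 * ∑ i, (y i - (X *ᵥ b') i) ^ 2 + J b') (j : κ) :
    |(Xᵀ *ᵥ (y - X *ᵥ b)) j| ≤ L := by
  classical
  refine abs_le_of_forall_mul_le_add_sq (q := (∑ i, X i j ^ 2) / 2) fun t ↦ ?_
  have hmin := hb (b + Pi.single j t)
  have hpen := hJ b (b + Pi.single j t)
  have hdist : ∑ i, |(b + Pi.single j t : κ → ℝ) i - b i| = |t| := by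
    simp [Pi.single_apply, apply_ite abs]
  rw [sum_sq_sub_mulVec_add_single] at hmin
  rw [hdist] at hpen
  linarith

end PenalizedLeastSquares

section SlopeNorm

lemma slopeNorm_le_add {p : ℕ} (Λ a b : Fin p → ℝ) :
    slopeNorm Λ b ≤ slopeNorm Λ a + ‖Λ‖ * ∑ i, |b i - a i| := by
  refine ciSup_le fun τ ↦ ?_
  have hterm : ∀ i, Λ i * |b (τ i)| ≤ Λ i * |a (τ i)| + ‖Λ‖ * |b (τ i) - a (τ i)| := fun i ↦ by
    have : Λ i * (|b (τ i)| - |a (τ i)|) ≤ ‖Λ‖ * |b (τ i) - a (τ i)| :=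
      calc Λ i * (|b (τ i)| - |a (τ i)|) ≤ |Λ i| * |(|b (τ i)| - |a (τ i)|)| :=
            (le_abs_self _).trans_eq (abs_mul _ _)
        _ ≤ ‖Λ‖ * |b (τ i) - a (τ i)| :=
            mul_le_mul (norm_le_pi_norm Λ i) (abs_abs_sub_abs_le _ _) (abs_nonneg _) (norm_nonneg _)
    linarith
  calc ∑ i, Λ i * |b (τ i)|
      ≤ ∑ i, (Λ i * |a (τ i)| + ‖Λ‖ * |b (τ i) - a (τ i)|) := Finset.sum_le_sum fun i _ ↦ hterm i
    _ = ∑ i, Λ i * |a (τ i)| + ‖Λ‖ * ∑ i, |b i - a i| := by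
        rw [Finset.sum_add_distrib, ← Finset.mul_sum, Equiv.sum_comp τ fun i ↦ |b i - a i|]
    _ ≤ slopeNorm Λ a + ‖Λ‖ * ∑ i, |b i - a i| := by
        gcongr
        exact le_ciSup (f := fun τ : Equiv.Perm (Fin p) ↦ ∑ i, Λ i * |a (τ i)|)
          (Set.finite_range _).bddAbove τ

lemma norm_transpose_mulVec_residual_le_of_slopeObj_le {n p : ℕ} {X : Matrix (Fin n) (Fin p) ℝ}
    {y : Fin n → ℝ} {Λ b : Fin p → ℝ} (hb : ∀ b', slopeObj X y Λ b ≤ slopeObj X y Λ b') :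
    ‖Xᵀ *ᵥ (y - X *ᵥ b)‖ ≤ ‖Λ‖ :=
  (pi_norm_le_iff_of_nonneg (norm_nonneg Λ)).2
    (abs_transpose_mulVec_residual_le (slopeNorm_le_add Λ) hb)

lemma norm_eq_apply_zero_of_antitone {p : ℕ} (hp : 0 < p) {v : Fin p → ℝ} (hv : Antitone v)
    (hv0 : ∀ i, 0 ≤ v i) : ‖v‖ = v ⟨0, hp⟩ := by
  refine le_antisymm ((pi_norm_le_iff_of_nonneg (hv0 _)).2 fun i ↦ ?_)
    ((le_abs_self _).trans (norm_le_pi_norm v _))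
  rw [Real.norm_of_nonneg (hv0 i)]
  exact hv (Fin.mk_le_of_le_val (Nat.zero_le _))

end SlopeNorm

section DeterministicConsistency

lemma tendsto_mulVec {α m n R : Type*} [Fintype n] [NonUnitalNonAssocSemiring R]
    [TopologicalSpace R] [ContinuousAdd R] [ContinuousMul R] {l : Filter α}
    {A : α → Matrix m n R} {A₀ : Matrix m n R} (hA : Tendsto A l (𝓝 A₀))
    {v : α → n → R} {v₀ : n → R} (hv : Tendsto v l (𝓝 v₀)) :
    Tendsto (fun a ↦ A a *ᵥ v a) l (𝓝 (A₀ *ᵥ v₀)) := by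
  have hcont : Continuous fun q : Matrix m n R × (n → R) ↦ q.1 *ᵥ q.2 :=
    continuous_fst.matrix_mulVec continuous_snd
  exact (hcont.tendsto (A₀, v₀)).comp (hA.prodMk_nhds hv)

lemma tendsto_of_tendsto_mulVec {α κ 𝕜 : Type*} [Fintype κ] [DecidableEq κ] [Field 𝕜]
    [TopologicalSpace 𝕜] [IsTopologicalDivisionRing 𝕜] [T1Space 𝕜] {l : Filter α}
    {G : α → Matrix κ κ 𝕜} {C : Matrix κ κ 𝕜} (hC : IsUnit C) (hG : Tendsto G l (𝓝 C))
    {u : α → κ → 𝕜} {v : κ → 𝕜} (hu : Tendsto (fun n ↦ G n *ᵥ u n) l (𝓝 v)) :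
    Tendsto u l (𝓝 (C⁻¹ *ᵥ v)) := by
  have hdet : C.det ≠ 0 := ((isUnit_iff_isUnit_det C).1 hC).ne_zero
  have hinv : Tendsto (fun n ↦ (G n)⁻¹) l (𝓝 C⁻¹) := by
    refine (continuousAt_matrix_inv C ?_).tendsto.comp hG
    rw [Ring.inverse_eq_inv']
    exact continuousAt_inv₀ hdet
  have hunit : ∀ᶠ n in l, (G n).det ≠ 0 := by
    have hcont : Continuous fun A : Matrix κ κ 𝕜 ↦ A.det := continuous_id.matrix_det
    exact hG.eventually (hcont.continuousAt.eventually_ne hdet)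
  refine (tendsto_mulVec hinv hu).congr' ?_
  filter_upwards [hunit] with n hn
  rw [mulVec_mulVec, nonsing_inv_mul _ hn.isUnit, one_mulVec]

theorem tendsto_of_slopeObj_le {α : Type*} {l : Filter α} {p : ℕ} {N : α → ℕ} {r : α → ℝ}
    {X : (n : α) → Matrix (Fin (N n)) (Fin p) ℝ} {C : Matrix (Fin p) (Fin p) ℝ} (hC : IsUnit C)
    (hX : Tendsto (fun n ↦ r n • ((X n)ᵀ * X n)) l (𝓝 C))
    {e : (n : α) → Fin (N n) → ℝ} (he : Tendsto (fun n ↦ r n • ((X n)ᵀ *ᵥ e n)) l (𝓝 0))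
    {Λ : α → Fin p → ℝ} (hΛ : Tendsto (fun n ↦ r n • Λ n) l (𝓝 0)) {β : Fin p → ℝ}
    {b : α → Fin p → ℝ} (hb : ∀ n b', slopeObj (X n) (X n *ᵥ β + e n) (Λ n) (b n) ≤
      slopeObj (X n) (X n *ᵥ β + e n) (Λ n) b') :
    Tendsto b l (𝓝 β) := by
  let score n := (X n)ᵀ *ᵥ (X n *ᵥ β + e n - X n *ᵥ b n)
  have hscore : Tendsto (fun n ↦ r n • score n) l (𝓝 0) := by
    refine squeeze_zero_norm (fun n ↦ ?_) (tendsto_zero_iff_norm_tendsto_zero.1 hΛ)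
    rw [norm_smul, norm_smul]
    gcongr
    exact norm_transpose_mulVec_residual_le_of_slopeObj_le (hb n)
  have hnormal : ∀ n, (r n • ((X n)ᵀ * X n)) *ᵥ (b n - β) =
      r n • ((X n)ᵀ *ᵥ e n) - r n • score n := fun n ↦ by
    simp only [score, smul_mulVec, ← mulVec_mulVec, mulVec_sub, mulVec_add, ← smul_sub]
    congr 1
    abel
  have hgram : Tendsto (fun n ↦ (r n • ((X n)ᵀ * X n)) *ᵥ (b n - β)) l (𝓝 0) := by
    simpa only [hnormal, sub_zero] using he.sub hscore
  have herror : Tendsto (fun n ↦ b n - β) l (𝓝 0) := by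
    simpa only [mulVec_zero] using tendsto_of_tendsto_mulVec hC hX hgram
  exact tendsto_sub_nhds_zero_iff.1 herror

end DeterministicConsistency

section SubGaussian

variable {Ω : Type*} [MeasurableSpace Ω] {P : Measure Ω}

lemma hasSubgaussianMGF_mono {Z : Ω → ℝ} {c d : NNReal} (hZ : HasSubgaussianMGF Z c P)
    (hcd : c ≤ d) : HasSubgaussianMGF Z d P where
  integrable_exp_mul := hZ.integrable_exp_mul
  mgf_le t := (hZ.mgf_le t).trans (by gcongr)

lemma measureReal_le_abs_le_of_hasSubgaussianMGF [IsFiniteMeasure P] {Z : Ω → ℝ} {c : NNReal}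
    (hZ : HasSubgaussianMGF Z c P) {t : ℝ} (ht : 0 ≤ t) :
    P.real {ω | t ≤ |Z ω|} ≤ 2 * Real.exp (-t ^ 2 / (2 * c)) :=
  calc P.real {ω | t ≤ |Z ω|} = P.real ({ω | t ≤ Z ω} ∪ {ω | t ≤ (-Z) ω}) := by
        simp only [le_abs, Set.ofPred_or, Pi.neg_apply]
    _ ≤ P.real {ω | t ≤ Z ω} + P.real {ω | t ≤ (-Z) ω} := measureReal_union_le _ _
    _ ≤ 2 * Real.exp (-t ^ 2 / (2 * c)) := by
        linarith [hZ.measure_ge_le ht, hZ.neg.measure_ge_le ht]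

lemma ae_tendsto_zero_of_summable_measureReal [IsFiniteMeasure P] {E : Type*}
    [SeminormedAddGroup E] {Z : ℕ → Ω → E}
    (hZ : ∀ t > 0, Summable fun n ↦ P.real {ω | t ≤ ‖Z n ω‖}) :
    ∀ᵐ ω ∂P, Tendsto (fun n ↦ Z n ω) atTop (𝓝 0) := by
  have hsmall : ∀ᵐ ω ∂P, ∀ k : ℕ, ∀ᶠ n in atTop, ‖Z n ω‖ < 1 / ((k : ℝ) + 1) := by
    refine ae_all_iff.2 fun k ↦ ?_
    have hfin : ∑' n, P {ω | 1 / ((k : ℝ) + 1) ≤ ‖Z n ω‖} ≠ ⊤ := by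
      simpa only [ofReal_measureReal (measure_ne_top P _)] using
        (hZ _ Nat.one_div_pos_of_nat).tsum_ofReal_ne_top
    filter_upwards [ae_eventually_notMem hfin] with ω hω
    filter_upwards [hω] with n hn using not_le.1 hn
  filter_upwards [hsmall] with ω hω
  refine NormedAddGroup.tendsto_nhds_zero.2 fun t ht ↦ ?_
  obtain ⟨k, hk⟩ := exists_nat_one_div_lt ht
  filter_upwards [hω k] with n hn using hn.trans hk

theorem ae_tendsto_zero_of_hasSubgaussianMGF_div [IsFiniteMeasure P] {Z : ℕ → Ω → ℝ} {K : NNReal}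
    (hZ : ∀ n : ℕ, HasSubgaussianMGF (Z n) (K / (n + 1)) P) :
    ∀ᵐ ω ∂P, Tendsto (fun n ↦ Z n ω) atTop (𝓝 0) := by
  refine ae_tendsto_zero_of_summable_measureReal fun t ht ↦ ?_
  let a : ℝ := -t ^ 2 / (2 * (K + 1))
  have ha : a < 0 := div_neg_of_neg_of_pos (by nlinarith) (by positivity)
  have htail : ∀ n : ℕ, P.real {ω | t ≤ ‖Z n ω‖} ≤ 2 * Real.exp ((n + 1 : ℕ) * a) := fun n ↦ by
    -- `K + 1` rather than `K`: for `K = 0` the tail bound reads `exp (-t ^ 2 / 0) = 1`.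
    have hmono := hasSubgaussianMGF_mono (hZ n) (d := (K + 1) / (n + 1)) (by gcongr; simp)
    refine (measureReal_le_abs_le_of_hasSubgaussianMGF hmono ht.le).trans_eq ?_
    congr 2
    push_cast
    simp only [a]
    field_simp
  exact .of_nonneg_of_le (fun _ ↦ measureReal_nonneg) htail
    (((summable_nat_add_iff 1).2 (Real.summable_exp_nat_mul_iff.2 ha)).mul_left 2)

lemma hasSubgaussianMGF_dotProduct {ι : Type*} [Fintype ι] {e : Ω → ι → ℝ} {s : NNReal}
    (hind : iIndepFun (fun i ω ↦ e ω i) P) (he : ∀ i, HasSubgaussianMGF (fun ω ↦ e ω i) s P)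
    (a : ι → ℝ) : HasSubgaussianMGF (fun ω ↦ a ⬝ᵥ e ω) ((∑ i, ‖a i‖₊ ^ 2) * s) P := by
  have hterm : ∀ i, HasSubgaussianMGF (fun ω ↦ a i * e ω i) (‖a i‖₊ ^ 2 * s) P := fun i ↦ by
    have hsq : .mk (a i ^ 2) (sq_nonneg (a i)) = ‖a i‖₊ ^ 2 := NNReal.eq (by simp)
    exact hsq ▸ (he i).const_mul (a i)
  rw [Finset.sum_mul]
  exact .sum_of_iIndepFun (hind.comp (fun i x ↦ a i * x) fun i ↦ by fun_prop) fun i _ ↦ hterm i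

theorem ae_tendsto_smul_transpose_mulVec_zero {ι : ℕ → Type*} [∀ n, Fintype (ι n)]
    {κ : Type*} [Countable κ] {X : (n : ℕ) → Matrix (ι n) κ ℝ}
    {C : Matrix κ κ ℝ}
    (hX : Tendsto (fun n : ℕ ↦ (1 / ((n : ℝ) + 1)) • ((X n)ᵀ * X n)) atTop (𝓝 C))
    {e : (n : ℕ) → Ω → ι n → ℝ} {s : NNReal} (hind : ∀ n, iIndepFun (fun i ω ↦ e n ω i) P)
    (he : ∀ n i, HasSubgaussianMGF (fun ω ↦ e n ω i) s P) :
    ∀ᵐ ω ∂P, Tendsto (fun n : ℕ ↦ (1 / ((n : ℝ) + 1)) • ((X n)ᵀ *ᵥ e n ω)) atTop (𝓝 0) := by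
  have := (hind 0).isProbabilityMeasure
  simp only [tendsto_pi_nhds, eventually_countable_forall]
  intro j
  let a (n : ℕ) : ι n → ℝ := (1 / ((n : ℝ) + 1)) • (X n).col j
  have hdiag : Tendsto (fun n : ℕ ↦ 1 / ((n : ℝ) + 1) * ∑ i, X n i j ^ 2) atTop (𝓝 (C j j)) := by
    simpa only [Matrix.smul_apply, mul_apply, transpose_apply, smul_eq_mul, ← pow_two]
      using (hX.apply_nhds j).apply_nhds j
  obtain ⟨K, hK⟩ := hdiag.bddAbove_range
  have hproxy : ∀ n : ℕ, (∑ i, ‖a n i‖₊ ^ 2) * s ≤ K.toNNReal * s / (n + 1) := fun n ↦ by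
    have hn : 1 / ((n : ℝ) + 1) * ∑ i, X n i j ^ 2 ≤ K.toNNReal :=
      (hK ⟨n, rfl⟩).trans (Real.le_coe_toNNReal K)
    rw [← NNReal.coe_le_coe]
    push_cast
    calc (∑ i, ‖a n i‖ ^ 2) * (s : ℝ)
        = (1 / ((n : ℝ) + 1) * ∑ i, X n i j ^ 2) * s / (n + 1) := by
          simp only [a, Pi.smul_apply, col_apply, smul_eq_mul, Real.norm_eq_abs, sq_abs, mul_pow,
            ← Finset.mul_sum]
          ring
      _ ≤ K.toNNReal * s / (n + 1) := by gcongr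
  filter_upwards [ae_tendsto_zero_of_hasSubgaussianMGF_div fun n ↦
    hasSubgaussianMGF_mono (hasSubgaussianMGF_dotProduct (hind n) (he n) (a n)) (hproxy n)]
    with ω hω
  simp only [a, smul_dotProduct] at hω
  exact hω

end SubGaussian

section Gaussian

variable {Ω : Type*} [MeasurableSpace Ω] {P : Measure Ω}

lemma hasLaw_apply_of_hasLaw_pi {ι : Type*} [Fintype ι] {E : ι → Type*}
    [∀ i, MeasurableSpace (E i)] {ν : (i : ι) → Measure (E i)} [∀ i, IsProbabilityMeasure (ν i)]
    {e : Ω → (i : ι) → E i} (he : HasLaw e (Measure.pi ν) P) (i : ι) :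
    HasLaw (fun ω ↦ e ω i) (ν i) P :=
  (measurePreserving_eval ν i).hasLaw.comp he

lemma iIndepFun_of_hasLaw_pi [IsProbabilityMeasure P] {ι : Type*} [Fintype ι] {E : ι → Type*}
    [∀ i, MeasurableSpace (E i)] {ν : (i : ι) → Measure (E i)} [∀ i, IsProbabilityMeasure (ν i)]
    {e : Ω → (i : ι) → E i} (he : HasLaw e (Measure.pi ν) P) :
    iIndepFun (fun i ω ↦ e ω i) P :=
  (iIndepFun_iff_hasLaw_pi_pi (hasLaw_apply_of_hasLaw_pi he)).2 he

lemma hasSubgaussianMGF_of_hasLaw_gaussianReal {Z : Ω → ℝ} {v : NNReal}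
    (hZ : HasLaw Z (gaussianReal 0 v) P) : HasSubgaussianMGF Z v P := by
  rw [← HasSubgaussianMGF.id_map_iff hZ.aemeasurable, hZ.map_eq]
  exact ⟨integrable_exp_mul_gaussianReal, fun t ↦ by simp [mgf_id_gaussianReal]⟩

end Gaussian

theorem slope_strong_consistency_general {Ω : Type*} [MeasurableSpace Ω]
    (P : Measure Ω) {p : ℕ}
    (X : (n : ℕ) → Matrix (Fin (n + 1)) (Fin p) ℝ) (s : NNReal)
    (ε : (n : ℕ) → Ω → (Fin (n + 1) → ℝ))
    (hind : ∀ n, iIndepFun (fun i ω ↦ ε n ω i) P)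
    (hε : ∀ n i, HasSubgaussianMGF (fun ω ↦ ε n ω i) s P)
    (β : Fin p → ℝ)
    (Y : (n : ℕ) → Ω → (Fin (n + 1) → ℝ))
    (hY : ∀ n ω, Y n ω = X n *ᵥ β + ε n ω)
    (C : Matrix (Fin p) (Fin p) ℝ) (hC : IsUnit C)
    (hlim : Tendsto (fun n : ℕ ↦ (1 / ((n : ℝ) + 1)) • ((X n)ᵀ * X n)) atTop (𝓝 C))
    (Λ : ℕ → Fin p → ℝ) (hΛ : Tendsto (fun n : ℕ ↦ ‖Λ n‖ / ((n : ℝ) + 1)) atTop (𝓝 0))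
    (βS : (n : ℕ) → Ω → (Fin p → ℝ))
    (hβS : ∀ n ω b, slopeObj (X n) (Y n ω) (Λ n) (βS n ω) ≤ slopeObj (X n) (Y n ω) (Λ n) b) :
    ∀ᵐ ω ∂P, Tendsto (fun n ↦ βS n ω) atTop (𝓝 β) := by
  have hΛ' : Tendsto (fun n : ℕ ↦ (1 / ((n : ℝ) + 1)) • Λ n) atTop (𝓝 0) := by
    refine squeeze_zero_norm (fun n ↦ le_of_eq ?_) hΛ
    rw [norm_smul, Real.norm_of_nonneg (by positivity), one_div_mul_eq_div]
  filter_upwards [ae_tendsto_smul_transpose_mulVec_zero hlim hind hε] with ω hω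
  exact tendsto_of_slopeObj_le hC hlim hω hΛ' fun n b ↦ hY n ω ▸ hβS n ω b

/-- Strong consistency of SLOPE: in the sequence of linear models
`Y⁽ⁿ⁾ = X⁽ⁿ⁾β + ε⁽ⁿ⁾` (with `n ≥ 1` encoded as `n + 1` observations), with
deterministic full-column-rank designs, errors `ε⁽ⁿ⁾ ~ N(0, σ²Iₙ)`,
`n⁻¹(X⁽ⁿ⁾)ᵀX⁽ⁿ⁾ → C` positive definite, tuning vectors `Λ⁽ⁿ⁾` sorted decreasingly
with nonnegative entries and `λ₁⁽ⁿ⁾ > 0`: if `λ₁⁽ⁿ⁾/n → 0`, then the SLOPE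
estimators converge to `β` almost surely. -/
theorem slope_strong_consistency {Ω : Type*} [MeasurableSpace Ω]
    (P : Measure Ω) [IsProbabilityMeasure P] {p : ℕ} (hp : 0 < p)
    (X : (n : ℕ) → Matrix (Fin (n + 1)) (Fin p) ℝ)
    (hrank : ∀ n, p ≤ n + 1 → (X n).rank = p)
    (σ : NNReal) (hσ : 0 < σ)
    (ε : (n : ℕ) → Ω → (Fin (n + 1) → ℝ))
    (hε : ∀ n, Measure.map (ε n) P =
      Measure.pi (fun _ : Fin (n + 1) => gaussianReal 0 (σ ^ 2)))
    (β : Fin p → ℝ)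
    (Y : (n : ℕ) → Ω → (Fin (n + 1) → ℝ))
    (hY : ∀ n ω, Y n ω = X n *ᵥ β + ε n ω)
    (C : Matrix (Fin p) (Fin p) ℝ) (hC : C.PosDef)
    (hlim : Tendsto (fun n : ℕ => (1 / ((n : ℝ) + 1)) • ((X n)ᵀ * X n)) atTop (𝓝 C))
    (Λ : ℕ → Fin p → ℝ) (hΛanti : ∀ n, Antitone (Λ n))
    (hΛnonneg : ∀ n i, 0 ≤ Λ n i) (hlam1 : ∀ n, 0 < Λ n ⟨0, hp⟩)
    (hlamn : Tendsto (fun n : ℕ => Λ n ⟨0, hp⟩ / ((n : ℝ) + 1)) atTop (𝓝 0))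
    (βS : (n : ℕ) → Ω → (Fin p → ℝ))
    (hβS : ∀ n ω b, slopeObj (X n) (Y n ω) (Λ n) (βS n ω) ≤ slopeObj (X n) (Y n ω) (Λ n) b) :
    ∀ᵐ ω ∂P, Tendsto (fun n => βS n ω) atTop (𝓝 β) := by
  have hlaw : ∀ n, HasLaw (ε n) (Measure.pi fun _ ↦ gaussianReal 0 (σ ^ 2)) P := fun n ↦
    ⟨.of_map_ne_zero (hε n ▸ IsProbabilityMeasure.ne_zero _), hε n⟩
  simp only [← norm_eq_apply_zero_of_antitone hp (hΛanti _) (hΛnonneg _)] at hlamn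
  exact slope_strong_consistency_general P X (σ ^ 2) ε (fun n ↦ iIndepFun_of_hasLaw_pi (hlaw n))
    (fun n i ↦ hasSubgaussianMGF_of_hasLaw_gaussianReal (hasLaw_apply_of_hasLaw_pi (hlaw n) i))
    β Y hY C hC.isUnit hlim Λ hlamn βS hβS
end
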